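/- arXiv:1605.02582 — 4 statements merged into one kernel-verified Lean document; each statement's English description precedes it below -/
import Mathlib

section
/- Let P, C, D be points of the Euclidean plane with ⟪D - P, C - P⟫ < 0, let A := 2 • P - C (the reflection of C in P), and let B := P + (2 * ⟪D - P, C - P⟫ / ‖D - P‖²) • (D - P) (the second intersection of line PD with the circle of center C through P). Then dist(A, D) = dist(A, P) if and only if P is the midpoint of B and D (equivalently, dist(B, P) = dist(P, D) with B, P, D collinear and P between B and D). -/
open RealInnerProductSpace

theorem dist_AD_eq_dist_AP_iff_midpoint
    (P C D : EuclideanSpace ℝ (Fin 2)) (h : ⟪D - P, C - P⟫ < 0)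
    (A B : EuclideanSpace ℝ (Fin 2))
    (hA : A = (2 : ℝ) • P - C)
    (hB : B = P + (2 * ⟪D - P, C - P⟫ / ‖D - P‖ ^ 2) • (D - P)) :
    dist A D = dist A P ↔ P = midpoint ℝ B D := by
  have hd : D - P ≠ 0 := by
    intro h0
    rw [h0, inner_zero_left] at h
    exact lt_irrefl _ h
  have hn : ‖D - P‖ ^ 2 ≠ 0 := pow_ne_zero 2 (norm_ne_zero_iff.mpr hd)
  have e1 : A - D = -((D - P) + (C - P)) := by rw [hA, two_smul]; abel
  have e2 : A - P = -(C - P) := by rw [hA, two_smul]; abel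
  have h1 : dist A D = dist A P ↔ 2 * ⟪D - P, C - P⟫ = -‖D - P‖ ^ 2 := by
    rw [dist_eq_norm, dist_eq_norm, e1, e2, norm_neg, norm_neg,
      ← sq_eq_sq₀ (norm_nonneg _) (norm_nonneg _), norm_add_sq_real]
    constructor <;> intro h <;> linarith
  rw [h1]
  have h2 : midpoint ℝ B D - P
      = ((2 * ⟪D - P, C - P⟫ / ‖D - P‖ ^ 2 + 1) / 2) • (D - P) := by
    rw [midpoint_eq_smul_add, hB, invOf_eq_inv]
    module
  rw [eq_comm (a := P), ← sub_eq_zero (b := P), h2, smul_eq_zero, or_iff_left hd]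
  constructor
  · intro h
    rw [h, neg_div, div_self hn]
    norm_num
  · intro h
    have h3 : 2 * ⟪D - P, C - P⟫ / ‖D - P‖ ^ 2 = -1 := by linarith
    rw [div_eq_iff hn] at h3
    linarith
end

section
/- Let P, C, D be points of the Euclidean plane with ⟪D - P, C - P⟫ < 0, let A := 2 • P - C, and let B := P + (2 * ⟪D - P, C - P⟫ / ‖D - P‖²) • (D - P). If dist(A, D) = dist(A, P), then B - A = C - D; that is, if D lies on the circle of center A and radius dist(A, P), then the quadrilateral ABCD is a parallelogram. -/
open RealInnerProductSpace

theorem parallelogram_of_D_on_circle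
    (P C D : EuclideanSpace ℝ (Fin 2)) (h : ⟪D - P, C - P⟫ < 0)
    (A B : EuclideanSpace ℝ (Fin 2))
    (hA : A = (2 : ℝ) • P - C)
    (hB : B = P + (2 * ⟪D - P, C - P⟫ / ‖D - P‖ ^ 2) • (D - P))
    (hAD : dist A D = dist A P) :
    B - A = C - D := by
  have hd : D - P ≠ 0 := by
    intro h0
    rw [h0, inner_zero_left] at h
    exact lt_irrefl _ h
  have hn : ‖D - P‖ ^ 2 ≠ 0 := pow_ne_zero 2 (norm_ne_zero_iff.mpr hd)
  have e1 : dist A D = ‖(D - P) + (C - P)‖ := by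
    rw [dist_eq_norm, ← norm_neg, hA]
    congr 1
    module
  have e2 : dist A P = ‖C - P‖ := by
    rw [dist_eq_norm, ← norm_neg, hA]
    congr 1
    module
  have e3 := norm_add_sq_real (D - P) (C - P)
  rw [← e1, hAD, e2] at e3
  have e4 : 2 * ⟪D - P, C - P⟫ / ‖D - P‖ ^ 2 = -1 := by
    rw [div_eq_iff hn]
    linarith
  rw [hB, e4, hA]
  module
end

section
/- Let P, C, D be points of the Euclidean plane with ⟪D - P, C - P⟫ < 0, let A := 2 • P - C, and let B := P + (2 * ⟪D - P, C - P⟫ / ‖D - P‖²) • (D - P). If B - A = C - D (i.e. ABCD is a parallelogram), then dist(A, D) = dist(A, P); that is, D necessarily lies on the circle of center A passing through P. -/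
open RealInnerProductSpace

theorem D_on_circle_of_parallelogram
    (P C D : EuclideanSpace ℝ (Fin 2)) (h : ⟪D - P, C - P⟫ < 0)
    (A B : EuclideanSpace ℝ (Fin 2))
    (hA : A = (2 : ℝ) • P - C)
    (hB : B = P + (2 * ⟪D - P, C - P⟫ / ‖D - P‖ ^ 2) • (D - P))
    (hpar : B - A = C - D) :
    dist A D = dist A P := by
  have hd : D - P ≠ 0 := by
    intro h0
    rw [h0, inner_zero_left] at h
    exact lt_irrefl _ h
  have hn : ‖D - P‖ ^ 2 ≠ 0 := pow_ne_zero 2 (norm_ne_zero_iff.mpr hd)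
  have hk : (2 * ⟪D - P, C - P⟫ / ‖D - P‖ ^ 2 + 1) • (D - P) = 0 := by
    rw [hB, hA] at hpar
    generalize 2 * ⟪D - P, C - P⟫ / ‖D - P‖ ^ 2 = k at hpar ⊢
    have h0 := sub_eq_zero.mpr hpar
    rw [← h0]
    module
  have hk1 := (smul_eq_zero.mp hk).resolve_right hd
  have h2 : 2 * ⟪D - P, C - P⟫ = - ‖D - P‖ ^ 2 := by
    field_simp at hk1
    linarith
  have e1 : A - D = -((D - P) + (C - P)) := by rw [hA]; module
  have e2 : A - P = -(C - P) := by rw [hA]; module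
  rw [dist_eq_norm, dist_eq_norm, e1, e2, norm_neg, norm_neg]
  have h3 := norm_add_sq_real (D - P) (C - P)
  rw [h2] at h3
  exact (sq_eq_sq₀ (norm_nonneg _) (norm_nonneg _)).mp (by linarith)
end

section
/- Let P and C be points of the Euclidean plane with C ≠ P, and let A := 2 • P - C. Then the set of points D satisfying ⟪D - P, C - P⟫ < 0 and P = midpoint(B(D), D), where B(D) := P + (2 * ⟪D - P, C - P⟫ / ‖D - P‖²) • (D - P), is exactly the set of points of the open half-plane {D | ⟪D - P, C - P⟫ < 0} lying on the circle of center A and radius dist(A, P): {D | ⟪D - P, C - P⟫ < 0 ∧ dist(A, D) = dist(A, P)}. -/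
open RealInnerProductSpace

theorem locus_of_D_is_circle_arc
    (P C : EuclideanSpace ℝ (Fin 2)) (hC : C ≠ P)
    (A : EuclideanSpace ℝ (Fin 2)) (hA : A = (2 : ℝ) • P - C)
    (B : EuclideanSpace ℝ (Fin 2) → EuclideanSpace ℝ (Fin 2))
    (hB : ∀ D, B D = P + (2 * ⟪D - P, C - P⟫ / ‖D - P‖ ^ 2) • (D - P)) :
    {D : EuclideanSpace ℝ (Fin 2) | ⟪D - P, C - P⟫ < 0 ∧ P = midpoint ℝ (B D) D} =
    {D : EuclideanSpace ℝ (Fin 2) | ⟪D - P, C - P⟫ < 0 ∧ dist A D = dist A P} := by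
  ext D
  simp only [Set.mem_setOf_eq]
  refine and_congr_right fun h => ?_
  have hu : D - P ≠ 0 := by
    intro h0
    rw [h0, inner_zero_left] at h
    exact lt_irrefl _ h
  have hn : 0 < ‖D - P‖ ^ 2 := by
    have := norm_pos_iff.mpr hu
    positivity
  have h1 : (P = midpoint ℝ (B D) D) ↔ 2 * ⟪D - P, C - P⟫ / ‖D - P‖ ^ 2 + 1 = 0 := by
    have e : midpoint ℝ (B D) D - P
        = ((1 / 2 : ℝ) * (2 * ⟪D - P, C - P⟫ / ‖D - P‖ ^ 2 + 1)) • (D - P) := by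
      rw [midpoint_eq_smul_add, hB, invOf_eq_inv]
      module
    rw [eq_comm, ← sub_eq_zero, e, smul_eq_zero]
    simp [hu]
  have h2 : dist A D = dist A P ↔ ‖D - P‖ ^ 2 + 2 * ⟪D - P, C - P⟫ = 0 := by
    have e1 : A - D = -((D - P) + (C - P)) := by rw [hA]; module
    have e2 : A - P = -(C - P) := by rw [hA]; module
    rw [dist_eq_norm, dist_eq_norm, e1, e2, norm_neg, norm_neg,
      ← sq_eq_sq₀ (norm_nonneg _) (norm_nonneg _), norm_add_sq_real]
    constructor <;> intro h <;> linarith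
  rw [h1, h2, div_add_one hn.ne', div_eq_zero_iff]
  constructor
  · rintro (h | h)
    · linarith
    · exact absurd h hn.ne'
  · intro h
    left
    linarith
end
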